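/- arXiv:2506.02220 — 4 statements merged into one kernel-verified Lean document; each statement's English description precedes it below -/
import Mathlib

section
/- Let k ≥ 1 and A a real symmetric k×k matrix. For each β > 0 let S*_β be the unique maximizer over 𝒢 of S ↦ β tr(AS) + (1/2) log det S. Then lim_{β→∞} tr(A S*_β) = max_{S ∈ 𝒢} tr(AS); that is, the value tr(A S*_β) converges as β → ∞ to the optimal value of the semidefinite relaxation of the weighted max-cut problem with edge-weight matrix A. -/
open MeasureTheory Matrix Filter Topology

noncomputable section

/-- `𝒢`: the set of `k × k` real positive semidefinite matrices with unit diagonal. -/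
def unitDiagPSD (k : ℕ) : Set (Matrix (Fin k) (Fin k) ℝ) :=
  {S | S.PosSemidef ∧ ∀ i, S i i = 1}

/-- The positive definite matrices with unit diagonal (the elements of `𝒢` at which
`log det` is finite; with the convention `log det S = -∞` for singular `S`,
maximizing `β tr(AS) + (1/2) log det S` over `𝒢` is the same as maximizing over this set). -/
def unitDiagPD (k : ℕ) : Set (Matrix (Fin k) (Fin k) ℝ) :=
  {S | S.PosDef ∧ ∀ i, S i i = 1}

/-- The objective `S ↦ β tr(AS) + (1/2) log det S`. -/
def gwObj {k : ℕ} (β : ℝ) (A S : Matrix (Fin k) (Fin k) ℝ) : ℝ :=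
  β * (A * S).trace + (1 / 2) * Real.log S.det

theorem aux_log_det {k : ℕ} {S : Matrix (Fin k) (Fin k) ℝ} (h : S ∈ unitDiagPD k) :
    Real.log S.det ≤ 0 := by
  obtain ⟨hS, hd⟩ := h
  have h1 := hS.isHermitian.det_eq_prod_eigenvalues
  have h2 := hS.isHermitian.trace_eq_sum_eigenvalues
  simp only [RCLike.ofReal_real_eq_id, id] at h1 h2
  have h3 : S.trace = k := by simp [Matrix.trace, hd]
  rw [h1, Real.log_prod (fun i _ => (hS.eigenvalues_pos i).ne')]
  calc _ ≤ ∑ i, (hS.isHermitian.eigenvalues i - 1) :=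
        Finset.sum_le_sum fun i _ => Real.log_le_sub_one_of_pos (hS.eigenvalues_pos i)
    _ = 0 := by rw [Finset.sum_sub_distrib, ← h2, h3]; simp

/-- For each `β > 0` let `S*_β` be the unique maximizer over `𝒢` of
`S ↦ β tr(AS) + (1/2) log det S`. Then `tr(A S*_β)` converges, as `β → ∞`, to the optimal
value `max_{S ∈ 𝒢} tr(AS)` of the max-cut SDP relaxation. -/
theorem stmt4 {k : ℕ} (hk : 1 ≤ k) (A : Matrix (Fin k) (Fin k) ℝ) (hA : A.IsSymm)
    (Sstar : ℝ → Matrix (Fin k) (Fin k) ℝ)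
    (hmem : ∀ β : ℝ, 0 < β → Sstar β ∈ unitDiagPD k)
    (hmax : ∀ β : ℝ, 0 < β → IsMaxOn (gwObj β A) (unitDiagPD k) (Sstar β))
    (huniq : ∀ β : ℝ, 0 < β → ∀ T ∈ unitDiagPD k,
      IsMaxOn (gwObj β A) (unitDiagPD k) T → T = Sstar β)
    (qstar : ℝ) (hq : IsGreatest ((fun S => (A * S).trace) '' unitDiagPSD k) qstar) :
    Tendsto (fun β : ℝ => (A * Sstar β).trace) atTop (𝓝 qstar) := by
  obtain ⟨⟨S0, ⟨hS0, hd0⟩, hq0⟩, hub⟩ := hq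
  simp only at hq0
  rw [Metric.tendsto_atTop]
  intro δ hδ
  obtain ⟨ε, he0, he1, heδ⟩ : ∃ ε : ℝ, 0 < ε ∧ ε ≤ 1 ∧ ε * |A.trace - qstar| < δ / 2 := by
    refine ⟨min 1 (δ / (4 * (|A.trace - qstar| + 1))), by positivity, min_le_left _ _, ?_⟩
    have hm := abs_nonneg (A.trace - qstar)
    calc _ ≤ δ / (4 * (|A.trace - qstar| + 1)) * |A.trace - qstar| :=
          mul_le_mul_of_nonneg_right (min_le_right _ _) hm
      _ < δ / 2 := by
          rw [div_mul_eq_mul_div, div_lt_div_iff₀ (by positivity) (by norm_num)]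
          nlinarith
  set T : Matrix (Fin k) (Fin k) ℝ := (1 - ε) • S0 + ε • 1 with hT
  have hTmem : T ∈ unitDiagPD k := by
    refine ⟨?_, fun i => by simp [hT, hd0]⟩
    exact Matrix.PosDef.posSemidef_add (hS0.smul (by linarith)) (Matrix.PosDef.one.smul he0)
  have hTtr : (A * T).trace = qstar + ε * (A.trace - qstar) := by
    simp only [hT, Matrix.mul_add, Matrix.mul_smul, Matrix.trace_add, Matrix.trace_smul,
      Matrix.mul_one, smul_eq_mul, hq0]
    ring
  have hlow := (abs_le.mp (le_refl |A.trace - qstar|)).1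
  refine ⟨1 + |Real.log T.det| / δ, fun β hβ => ?_⟩
  have hβ0 : 0 < β := lt_of_lt_of_le (by positivity) hβ
  have hβδ : |Real.log T.det| < β * δ := by
    rw [← div_lt_iff₀ hδ]; linarith
  have h1 := hmax β hβ0 hTmem
  simp only [Set.mem_setOf_eq, gwObj, hTtr] at h1
  have h2 := aux_log_det (hmem β hβ0)
  have h3 : (A * Sstar β).trace ≤ qstar :=
    hub ⟨Sstar β, ⟨(hmem β hβ0).1.posSemidef, (hmem β hβ0).2⟩, rfl⟩
  have h4 := neg_abs_le (Real.log T.det)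
  have h5 : -(δ / 2) < ε * (A.trace - qstar) := by nlinarith
  rw [Real.dist_eq, abs_lt]
  refine ⟨?_, by linarith⟩
  have : β * (qstar - δ) < β * (A * Sstar β).trace := by nlinarith
  have := lt_of_mul_lt_mul_left this hβ0.le
  linarith

end
end

section
/- Let d ≥ 1, let P ⊂ ℝ^d be compact with nonempty interior, and let μ_P denote Lebesgue measure restricted to P. Let f : P → ℝ be smooth and strictly concave, with a unique maximizer x* lying in the interior of P at which the Hessian ∇²f(x*) is negative definite. Let g : P → ℝ be smooth, nonnegative, bounded, with g(x*) > 0. Then for every b ∈ (0, 1/2), lim_{n→∞} [ ∫_{P ∩ B(x*, n^{−1/2+b})} e^{n f(x)} g(x) dx ] / [ ∫_{P} e^{n f(x)} g(x) dx ] = 1; that is, a random variable with (unnormalized) density e^{n f(x)} g(x) on P concentrates on the ball of radius n^{−1/2+b} around x* as n → ∞. -/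
open MeasureTheory Matrix Filter Topology

noncomputable section

lemma quad_aux {E : Type*} [NormedAddCommGroup E] [NormedSpace ℝ E] (f : E → ℝ) (x : E)
    (hf : ContDiffAt ℝ 2 f x) (h0 : fderiv ℝ f x = 0) (ε : ℝ) (hε : 0 < ε) :
    ∃ r > 0, ∀ v : E, ‖v‖ < r →
      |f (x + v) - f x - 1 / 2 * fderiv ℝ (fderiv ℝ f) x v v| ≤ ε * ‖v‖ ^ 2 := by
  have h1 : ContDiffAt ℝ 1 (fderiv ℝ f) x := hf.fderiv_right (by norm_num)
  have h2 : HasFDerivAt (fderiv ℝ f) (fderiv ℝ (fderiv ℝ f) x) x :=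
    (h1.differentiableAt (by norm_num)).hasFDerivAt
  have h3 := h2.isLittleO.def hε
  have h4 : ∀ᶠ y in 𝓝 x, DifferentiableAt ℝ f y := by
    filter_upwards [hf.eventually (by simp)] with y hy
    exact hy.differentiableAt (by norm_num)
  obtain ⟨r, hr, hb⟩ := Metric.eventually_nhds_iff_ball.1 (h3.and h4)
  refine ⟨r, hr, fun v hv => ?_⟩
  set H := fderiv ℝ (fderiv ℝ f) x with hH
  have hmem : ∀ t ∈ Set.Icc (0:ℝ) 1, x + t • v ∈ Metric.ball x r := by
    intro t ht
    rw [mem_ball_iff_norm, add_sub_cancel_left, norm_smul, Real.norm_eq_abs, abs_of_nonneg ht.1]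
    have := mul_le_mul_of_nonneg_right ht.2 (norm_nonneg v)
    linarith
  have hder : ∀ t ∈ Set.Icc (0:ℝ) 1, HasDerivWithinAt
      (fun t : ℝ => f (x + t • v) - t ^ 2 / 2 * H v v)
      (fderiv ℝ f (x + t • v) v - t * H v v) (Set.Icc 0 1) t := by
    intro t ht
    have e1 : HasDerivAt (fun t : ℝ => x + t • v) v t := by
      simpa using ((hasDerivAt_id t).smul_const v).const_add x
    have e2 := ((hb _ (hmem t ht)).2.hasFDerivAt).comp_hasDerivAt t e1
    have e3 : HasDerivAt (fun t : ℝ => t ^ 2 / 2 * H v v) (t * H v v) t := by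
      have := (((hasDerivAt_id t).pow 2).div_const 2).mul_const (H v v)
      refine this.congr_deriv ?_
      simp
    exact (e2.sub e3).hasDerivWithinAt
  have hbd : ∀ t ∈ Set.Ico (0:ℝ) 1, ‖fderiv ℝ f (x + t • v) v - t * H v v‖ ≤ ε * ‖v‖ ^ 2 := by
    intro t ht
    have ht' : t ∈ Set.Icc (0:ℝ) 1 := ⟨ht.1, ht.2.le⟩
    have e := (hb _ (hmem t ht')).1
    rw [h0, sub_zero, add_sub_cancel_left] at e
    have e' := (fderiv ℝ f (x + t • v) - H (t • v)).le_opNorm v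
    have e1 : (fderiv ℝ f (x + t • v) - H (t • v)) v = fderiv ℝ f (x + t • v) v - t * H v v := by
      simp
    rw [e1] at e'
    refine e'.trans ?_
    have e2 : ‖t • v‖ ≤ ‖v‖ := by
      rw [norm_smul, Real.norm_eq_abs, abs_of_nonneg ht.1]
      exact mul_le_of_le_one_left (norm_nonneg v) ht.2.le
    have e3 := mul_le_mul_of_nonneg_right (e.trans (mul_le_mul_of_nonneg_left e2 hε.le))
      (norm_nonneg v)
    nlinarith
  have := norm_image_sub_le_of_norm_deriv_le_segment' hder hbd 1 (by simp)
  simp only [one_smul, zero_smul, add_zero, Real.norm_eq_abs] at this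
  have e : f (x + v) - 1 ^ 2 / 2 * H v v - (f x - 0 ^ 2 / 2 * H v v)
      = f (x + v) - f x - 1 / 2 * H v v := by ring
  rw [e] at this
  linarith

lemma bounds_aux {E : Type*} [NormedAddCommGroup E] [NormedSpace ℝ E] [FiniteDimensional ℝ E]
    (P : Set E) (hP : IsCompact P) (f : E → ℝ) (x : E) (hx : x ∈ interior P)
    (hf : ContDiffOn ℝ (⊤ : ℕ∞) f P)
    (hmax : IsMaxOn f P x)
    (huniq : ∀ y ∈ P, IsMaxOn f P y → y = x)
    (hHess : ∀ v : E, v ≠ 0 → (iteratedFDerivWithin ℝ 2 f P x) ![v, v] < 0) :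
    (∃ c > 0, ∀ y ∈ P, f y ≤ f x - c * ‖y - x‖ ^ 2) ∧
    (∃ C r : ℝ, 0 < C ∧ 0 < r ∧ ∀ y ∈ Metric.ball x r, f x - C * ‖y - x‖ ^ 2 ≤ f y) := by
  have hPn : P ∈ 𝓝 x := mem_interior_iff_mem_nhds.1 hx
  have hxP : x ∈ P := interior_subset hx
  have hfx : ContDiffAt ℝ 2 f x := (hf.contDiffAt hPn).of_le (by
    have h : ((2 : ℕ∞) : WithTop ℕ∞) ≤ ((⊤ : ℕ∞) : WithTop ℕ∞) := WithTop.coe_le_coe.2 le_top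
    exact h)
  have h0 : fderiv ℝ f x = 0 := (hmax.isLocalMax hPn).fderiv_eq_zero
  set H := fderiv ℝ (fderiv ℝ f) x with hH
  have hneg : ∀ v : E, v ≠ 0 → H v v < 0 := by
    intro v hv
    have h := hHess v hv
    have e : iteratedFDerivWithin ℝ 2 f P x = iteratedFDeriv ℝ 2 f x := by
      rw [← iteratedFDerivWithin_univ]
      exact iteratedFDerivWithin_congr_set (by simpa using hPn) 2
    rw [e, iteratedFDeriv_two_apply] at h
    simpa using h
  obtain ⟨l, hl, hlb⟩ : ∃ l > 0, ∀ v ∈ Metric.sphere (0:E) 1, l ≤ - H v v := by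
    apply (isCompact_sphere (0:E) 1).exists_forall_le' (a := (0:ℝ)) (f := fun v => - H v v)
    · fun_prop
    · intro v hv
      have : v ≠ 0 := by
        rintro rfl; simp at hv
      have := hneg v this
      linarith
  have hlb' : ∀ v : E, H v v ≤ - l * ‖v‖ ^ 2 := by
    intro v
    rcases eq_or_ne v 0 with rfl | hv
    · simp
    have hn : 0 < ‖v‖ := norm_pos_iff.2 hv
    have := hlb (‖v‖⁻¹ • v) (by simp [norm_smul, hn.ne'])
    simp only [map_smul, ContinuousLinearMap.smul_apply, smul_eq_mul] at this
    have h2 := mul_le_mul_of_nonneg_right this (sq_nonneg ‖v‖)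
    have h3 : -(‖v‖⁻¹ * (‖v‖⁻¹ * H v v)) * ‖v‖ ^ 2 = - H v v := by field_simp
    linarith
  obtain ⟨r, hr, hq⟩ := quad_aux f x hfx h0 (l / 4) (by positivity)
  constructor
  · obtain ⟨c, hc, hcb⟩ : ∃ c > 0, ∀ y ∈ P \ Metric.ball x r, c ≤ (f x - f y) / ‖y - x‖ ^ 2 := by
      have hne : ∀ y ∈ P \ Metric.ball x r, 0 < ‖y - x‖ := by
        intro y hy
        have := hy.2
        rw [mem_ball_iff_norm, not_lt] at this
        linarith
      apply (hP.diff Metric.isOpen_ball).exists_forall_le' (a := (0:ℝ))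
        (f := fun y => (f x - f y) / ‖y - x‖ ^ 2)
      · apply ContinuousOn.div
        · exact continuousOn_const.sub (hf.continuousOn.mono Set.sdiff_subset)
        · fun_prop
        · intro y hy
          exact (pow_pos (hne y hy) 2).ne'
      · intro y hy
        have h1 := hne y hy
        have h2 : f y < f x := by
          by_contra hcon
          push Not at hcon
          have : y = x := huniq y hy.1 (fun z hz => (hmax hz).trans hcon)
          simp [this] at h1
        have : 0 < f x - f y := by linarith
        positivity
    refine ⟨min c (l / 4), by positivity, fun y hy => ?_⟩
    by_cases hyr : y ∈ Metric.ball x r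
    · have h1 := hq (y - x) (mem_ball_iff_norm.1 hyr)
      rw [add_sub_cancel] at h1
      have h2 := hlb' (y - x)
      have h3 := (abs_le.1 h1).2
      have h4 := mul_le_mul_of_nonneg_right (min_le_right c (l / 4)) (sq_nonneg ‖y - x‖)
      rw [← hH] at h3
      linarith
    · have h1 := hcb y ⟨hy, hyr⟩
      have hn : 0 < ‖y - x‖ := by
        rw [mem_ball_iff_norm, not_lt] at hyr
        linarith
      rw [le_div_iff₀ (by positivity)] at h1
      have h4 := mul_le_mul_of_nonneg_right (min_le_left c (l / 4)) (sq_nonneg ‖y - x‖)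
      linarith
  · refine ⟨‖H‖ + l / 4, r, by positivity, hr, fun y hyr => ?_⟩
    have h1 := hq (y - x) (mem_ball_iff_norm.1 hyr)
    rw [add_sub_cancel] at h1
    have h3 := (abs_le.1 h1).1
    have h4 := (H).le_opNorm₂ (y - x) (y - x)
    have h5 := (abs_le.1 h4).1
    rw [← hH] at h3
    have h6 : 0 ≤ ‖H‖ * ‖y - x‖ ^ 2 := by positivity
    nlinarith

/-- Laplace-method concentration: for a compact `P ⊂ ℝ^d` with nonempty
interior, `f` smooth and strictly concave on `P` with unique interior maximizer `x*` at
which the Hessian is negative definite, and `g` smooth, nonnegative, bounded with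
`g(x*) > 0`, the mass of `e^{nf} g` concentrates on the ball `B(x*, n^{−1/2+b})`. -/
theorem stmt10 {d : ℕ} (hd : 1 ≤ d)
    (P : Set (EuclideanSpace ℝ (Fin d))) (hP : IsCompact P)
    (hPint : (interior P).Nonempty)
    (f g : EuclideanSpace ℝ (Fin d) → ℝ)
    (hf : ContDiffOn ℝ (⊤ : ℕ∞) f P) (hconc : StrictConcaveOn ℝ P f)
    (xstar : EuclideanSpace ℝ (Fin d)) (hx : xstar ∈ interior P)
    (hmax : IsMaxOn f P xstar)
    (huniq : ∀ y ∈ P, IsMaxOn f P y → y = xstar)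
    (hHess : ∀ v : EuclideanSpace ℝ (Fin d), v ≠ 0 →
      (iteratedFDerivWithin ℝ 2 f P xstar) ![v, v] < 0)
    (hg : ContDiffOn ℝ (⊤ : ℕ∞) g P) (hg0 : ∀ x ∈ P, 0 ≤ g x)
    (hgbdd : BddAbove (g '' P)) (hgx : 0 < g xstar) :
    ∀ b ∈ Set.Ioo (0 : ℝ) (1 / 2),
      Tendsto (fun n : ℕ =>
          (∫ x in P ∩ Metric.ball xstar ((n : ℝ) ^ (-(1 / 2 : ℝ) + b)),
              Real.exp (n * f x) * g x) /
          (∫ x in P, Real.exp (n * f x) * g x))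
        atTop (𝓝 1) := by
  intro b hb
  obtain ⟨⟨c, hc, hcb⟩, C, r, hC, hr, hCb⟩ :=
    bounds_aux P hP f xstar hx hf hmax huniq hHess
  have hPn : P ∈ 𝓝 xstar := mem_interior_iff_mem_nhds.1 hx
  have hxP : xstar ∈ P := interior_subset hx
  obtain ⟨M, hM⟩ := hgbdd
  have hMb : ∀ y ∈ P, g y ≤ M := fun y hy => hM ⟨y, hy, rfl⟩
  have hM0 : 0 < M := hgx.trans_le (hMb _ hxP)
  have hgc : ContinuousAt g xstar := hg.continuousOn.continuousAt hPn
  have hge : ∀ᶠ y in 𝓝 xstar, g xstar / 2 < g y :=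
    hgc.eventually (lt_mem_nhds (by linarith))
  obtain ⟨s, hs, hsb⟩ := Metric.eventually_nhds_iff_ball.1
    (hge.and ((eventually_mem_set.2 hPn).and (eventually_mem_set.2 (Metric.ball_mem_nhds xstar hr))))
  have hPm : MeasurableSet P := hP.measurableSet
  have hint : ∀ n : ℕ, IntegrableOn (fun x => Real.exp (n * f x) * g x) P := fun n =>
    ContinuousOn.integrableOn_compact hP
      ((Real.continuous_exp.comp_continuousOn (continuousOn_const.mul hf.continuousOn)).mul
        hg.continuousOn)
  have hnn : ∀ n : ℕ, ∀ y ∈ P, 0 ≤ Real.exp (n * f y) * g y := fun n y hy =>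
    mul_nonneg (Real.exp_pos _).le (hg0 y hy)
  set V := volume.real P with hV
  set W := volume.real (Metric.ball (0 : EuclideanSpace ℝ (Fin d)) 1) with hW
  have hWpos : 0 < W := by
    refine ENNReal.toReal_pos (Metric.measure_ball_pos _ _ one_pos).ne' measure_ball_lt_top.ne
  set I : ℕ → ℝ := fun n => ∫ x in P, Real.exp (n * f x) * g x with hI
  set O : ℕ → ℝ := fun n => ∫ x in P \ Metric.ball xstar ((n : ℝ) ^ (-(1 / 2 : ℝ) + b)),
      Real.exp (n * f x) * g x with hO
  have hO0 : ∀ n, 0 ≤ O n := fun n =>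
    setIntegral_nonneg (hPm.diff measurableSet_ball) (fun y hy => hnn n y hy.1)
  -- upper bound on O
  have hOub : ∀ n : ℕ, 0 < n → O n ≤
      Real.exp (n * f xstar) * Real.exp (-c * (n:ℝ) ^ (2 * b)) * M * V := by
    intro n hn
    have hn' : (0:ℝ) < n := by exact_mod_cast hn
    have hfin : volume P < ⊤ := hP.measure_lt_top
    have hfin' : volume (P \ Metric.ball xstar ((n : ℝ) ^ (-(1 / 2 : ℝ) + b))) < ⊤ :=
      (measure_mono Set.sdiff_subset).trans_lt hfin
    have h1 : O n ≤ ∫ x in P \ Metric.ball xstar ((n : ℝ) ^ (-(1 / 2 : ℝ) + b)),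
        Real.exp (n * f xstar) * Real.exp (-c * (n:ℝ) ^ (2 * b)) * M := by
      apply setIntegral_mono_on ((hint n).mono_set Set.sdiff_subset)
        (integrableOn_const hfin'.ne) (hPm.diff measurableSet_ball)
      intro y hy
      apply mul_le_mul _ (hMb y hy.1) (hg0 y hy.1) (by positivity)
      rw [← Real.exp_add]
      apply Real.exp_le_exp.2
      have h2 := hcb y hy.1
      have h3 := hy.2
      rw [mem_ball_iff_norm, not_lt] at h3
      have h4 : ((n : ℝ) ^ (-(1 / 2 : ℝ) + b)) ^ 2 ≤ ‖y - xstar‖ ^ 2 := by gcongr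
      have h5 : (n:ℝ) * ((n : ℝ) ^ (-(1 / 2 : ℝ) + b)) ^ 2 = (n:ℝ) ^ (2 * b) := by
        rw [← Real.rpow_natCast, ← Real.rpow_mul hn'.le]
        nth_rewrite 1 [← Real.rpow_one (n:ℝ)]
        rw [← Real.rpow_add hn']
        congr 1
        push_cast
        ring
      have h6 := mul_le_mul_of_nonneg_left h4 hn'.le
      rw [h5] at h6
      have h7 := mul_le_mul_of_nonneg_left h6 hc.le
      have h8 := mul_le_mul_of_nonneg_left h2 hn'.le
      nlinarith
    refine h1.trans ?_
    rw [setIntegral_const, smul_eq_mul, mul_comm]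
    apply mul_le_mul_of_nonneg_left _ (by positivity)
    exact measureReal_mono Set.sdiff_subset hfin.ne
  -- lower bound on I
  have hIlb : ∀ᶠ n : ℕ in atTop, Real.exp (n * f xstar) * Real.exp (-C) * (g xstar / 2) *
      ((n:ℝ) ^ (-(d / 2 : ℝ)) * W) ≤ I n := by
    have ht : Tendsto (fun n : ℕ => (n:ℝ) ^ (-(1 / 2 : ℝ))) atTop (𝓝 0) :=
      (tendsto_rpow_neg_atTop (by norm_num)).comp tendsto_natCast_atTop_atTop
    filter_upwards [ht.eventually (gt_mem_nhds hs), eventually_gt_atTop 0] with n hns hn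
    have hn' : (0:ℝ) < n := by exact_mod_cast hn
    set ρ := (n:ℝ) ^ (-(1 / 2 : ℝ)) with hρ
    have hρ0 : 0 < ρ := by positivity
    have hsub : Metric.ball xstar ρ ⊆ Metric.ball xstar s := Metric.ball_subset_ball hns.le
    have hsubP : Metric.ball xstar ρ ⊆ P := fun y hy => (hsb y (hsub hy)).2.1
    have h1 : ∫ x in Metric.ball xstar ρ, Real.exp (n * f x) * g x ≤ I n :=
      setIntegral_mono_set (hint n)
        ((ae_restrict_iff' hPm).2 (Eventually.of_forall (fun y hy => hnn n y hy)))
        (HasSubset.Subset.eventuallyLE hsubP)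
    refine le_trans ?_ h1
    have h2 : ∫ x in Metric.ball xstar ρ,
        Real.exp (n * f xstar) * Real.exp (-C) * (g xstar / 2) ≤
        ∫ x in Metric.ball xstar ρ, Real.exp (n * f x) * g x := by
      apply setIntegral_mono_on (integrableOn_const measure_ball_lt_top.ne)
        ((hint n).mono_set hsubP) measurableSet_ball
      intro y hy
      obtain ⟨k1, k2, k3⟩ := hsb y (hsub hy)
      apply mul_le_mul _ k1.le (by positivity) (by positivity)
      rw [← Real.exp_add]
      apply Real.exp_le_exp.2
      have k4 := hCb y k3
      have k5 : ‖y - xstar‖ ^ 2 ≤ ρ ^ 2 := by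
        have := (mem_ball_iff_norm.1 hy).le
        gcongr
      have k6 : (n:ℝ) * ρ ^ 2 = 1 := by
        rw [hρ, ← Real.rpow_natCast, ← Real.rpow_mul hn'.le]
        nth_rewrite 1 [← Real.rpow_one (n:ℝ)]
        rw [← Real.rpow_add hn']
        norm_num
      have k7 := mul_le_mul_of_nonneg_left k5 hn'.le
      rw [k6] at k7
      have k8 := mul_le_mul_of_nonneg_left k7 hC.le
      have k9 := mul_le_mul_of_nonneg_left k4 hn'.le
      nlinarith
    refine le_trans (le_of_eq ?_) h2
    rw [setIntegral_const, smul_eq_mul, mul_comm]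
    congr 1
    rw [measureReal_def, Measure.addHaar_ball_of_pos _ _ hρ0, ENNReal.toReal_mul,
      ENNReal.toReal_ofReal (by positivity), ← measureReal_def,  finrank_euclideanSpace_fin, hρ,
      ← Real.rpow_natCast, ← Real.rpow_mul hn'.le]
    congr 2
    ring
  have hlim : Tendsto (fun n : ℕ => (Real.exp C * M * V / (g xstar / 2 * W)) *
      (((n:ℝ) ^ (2 * b)) ^ ((d:ℝ) / (4 * b)) * Real.exp (-c * (n:ℝ) ^ (2 * b)))) atTop (𝓝 0) := by
    have h1 := (tendsto_rpow_mul_exp_neg_mul_atTop_nhds_zero ((d:ℝ) / (4 * b)) c hc).comp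
      ((tendsto_rpow_atTop (y := 2 * b) (by linarith [hb.1])).comp tendsto_natCast_atTop_atTop)
    simpa using h1.const_mul (Real.exp C * M * V / (g xstar / 2 * W))
  have hquot : Tendsto (fun n => O n / I n) atTop (𝓝 0) := by
    refine tendsto_of_tendsto_of_tendsto_of_le_of_le' tendsto_const_nhds hlim ?_ ?_
    · exact Eventually.of_forall fun n => div_nonneg (hO0 n) (setIntegral_nonneg hPm (hnn n))
    · filter_upwards [hIlb, eventually_gt_atTop 0] with n h1 hn
      have hn' : (0:ℝ) < n := by exact_mod_cast hn
      have hb0 := hb.1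
      have hpos : 0 < Real.exp (n * f xstar) * Real.exp (-C) * (g xstar / 2) *
        ((n:ℝ) ^ (-(d / 2 : ℝ)) * W) := by positivity
      refine (div_le_div₀ (by positivity) (hOub n hn) hpos h1).trans (le_of_eq ?_)
      have e1 : ((n:ℝ) ^ (2 * b)) ^ ((d:ℝ) / (4 * b)) = (n:ℝ) ^ (d / 2 : ℝ) := by
        rw [← Real.rpow_mul hn'.le]
        congr 1
        field_simp
        norm_num
      rw [e1, Real.rpow_neg hn'.le, Real.exp_neg C]
      field_simp
  have hfin : Tendsto (fun n => 1 - O n / I n) atTop (𝓝 1) := by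
    simpa using hquot.const_sub 1
  refine hfin.congr' ?_
  filter_upwards [hIlb, eventually_gt_atTop 0] with n h1 hn
  have hn' : (0:ℝ) < n := by exact_mod_cast hn
  have hpos : 0 < I n := lt_of_lt_of_le (by positivity) h1
  have hsum := integral_inter_add_sdiff (measurableSet_ball (x := xstar)
    (ε := (n : ℝ) ^ (-(1 / 2 : ℝ) + b))) (hint n)
  have : (∫ x in P ∩ Metric.ball xstar ((n : ℝ) ^ (-(1 / 2 : ℝ) + b)),
              Real.exp (n * f x) * g x) = I n - O n := by
    rw [hI, hO]; linarith
  rw [this, sub_div, div_self hpos.ne']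

end
end

section
/- Let d ≥ 1, let P ⊂ ℝ^d be compact with nonempty interior, let f : P → ℝ be smooth and strictly concave with a unique maximizer x* in the interior of P at which the Hessian ∇²f(x*) is negative definite, and let g : P → ℝ be smooth, nonnegative, bounded, with g(x*) > 0. Write f* = f(x*). Then there exist a constant C > 0 and an integer N, both depending only on f, g, P (and not on n), such that for all n ≥ N, | ln( ∫_P e^{n f(x)} g(x) dx ) − ( n f* − (d/2) ln n ) | ≤ C. -/
open MeasureTheory Matrix Filter Topology
noncomputable section

lemma quad_approx {E : Type*} [NormedAddCommGroup E] [NormedSpace ℝ E] {f : E → ℝ} {x : E}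
    (hf : ContDiffAt ℝ 2 f x) (h0 : fderiv ℝ f x = 0) {ε : ℝ} (hε : 0 < ε) :
    ∃ r > 0, ∀ y ∈ Metric.ball x r,
      |f y - f x - 1 / 2 * fderiv ℝ (fderiv ℝ f) x (y - x) (y - x)| ≤ ε * ‖y - x‖ ^ 2 := by
  set L := fderiv ℝ (fderiv ℝ f) x with hL
  have hsymm : IsSymmSndFDerivAt ℝ f x := hf.isSymmSndFDerivAt (by simp)
  have hd : DifferentiableAt ℝ (fderiv ℝ f) x :=
    (hf.fderiv_right (m := 1) (by norm_num)).differentiableAt (by norm_num)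
  have h1 := hd.hasFDerivAt.isLittleO.def hε
  have h2 : ∀ᶠ y in 𝓝 x, DifferentiableAt ℝ f y := by
    filter_upwards [hf.eventually (by simp)] with y hy
    exact hy.differentiableAt (by norm_num)
  obtain ⟨r, hr, hball⟩ := Metric.eventually_nhds_iff_ball.1 (h1.and h2)
  refine ⟨r, hr, fun y hy => ?_⟩
  have key : ∀ z ∈ Metric.ball x r,
      HasFDerivAt (fun z => f z - 1 / 2 * L (z - x) (z - x)) (fderiv ℝ f z - L (z - x)) z := by
    intro z hz
    have e1 : HasFDerivAt (fun z : E => z - x) (ContinuousLinearMap.id ℝ E) z :=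
      (hasFDerivAt_id z).sub_const x
    have e2 := (L.hasFDerivAt.comp z e1).clm_apply e1
    have e3 := (hball z hz).2.hasFDerivAt.sub (e2.const_mul (1 / 2))
    refine e3.congr_fderiv ?_
    ext w
    have := hsymm w (z - x)
    simp only [← hL, map_sub, _root_.sub_apply] at this
    simp
    linarith
  have hs : Metric.closedBall x ‖y - x‖ ⊆ Metric.ball x r :=
    Metric.closedBall_subset_ball (by simpa [dist_eq_norm] using hy)
  have := (convex_closedBall x ‖y - x‖).norm_image_sub_le_of_norm_hasFDerivWithin_le
    (C := ε * ‖y - x‖) (x := x) (y := y)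
    (fun z hz => (key z (hs hz)).hasFDerivWithinAt) (fun z hz => by
      have := (hball z (hs hz)).1
      rw [h0, sub_zero] at this
      refine this.trans ?_
      gcongr
      simpa [dist_eq_norm] using hz) (by simp) (by simp [dist_eq_norm])
  rw [Real.norm_eq_abs] at this
  calc |f y - f x - 1 / 2 * L (y - x) (y - x)|
      = |f y - 1 / 2 * L (y - x) (y - x) - (f x - 1 / 2 * L (x - x) (x - x))| := by
        congr 1
        rw [sub_self, map_zero]
        ring
    _ ≤ ε * ‖y - x‖ * ‖y - x‖ := this
    _ = _ := by ring

lemma neg_coercive {E : Type*} [NormedAddCommGroup E] [NormedSpace ℝ E] [FiniteDimensional ℝ E]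
    (L : E →L[ℝ] E →L[ℝ] ℝ) (h : ∀ v, v ≠ 0 → L v v < 0) :
    ∃ c > 0, ∀ v, L v v ≤ - c * ‖v‖ ^ 2 := by
  have hc : Continuous fun v => L v v := by fun_prop
  obtain ⟨c, hc0, hc⟩ := (isCompact_sphere (0 : E) 1).exists_forall_le' (f := fun v => - L v v)
    (a := 0) (hc.neg.continuousOn) (fun v hv => by
      have : v ≠ 0 := by rintro rfl; simp at hv
      simpa using h v this)
  refine ⟨c, hc0, fun v => ?_⟩
  by_cases hv : v = 0
  · simp [hv]
  have hn : 0 < ‖v‖ := norm_pos_iff.2 hv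
  have := hc (‖v‖⁻¹ • v) (by simp [norm_smul, hn.ne'])
  simp only [map_smul, _root_.smul_apply, smul_eq_mul] at this
  field_simp at this
  linarith

lemma gauss_upper {d : ℕ} (x : EuclideanSpace ℝ (Fin d)) {b : ℝ} (hb : 0 < b) :
    Integrable (fun v => Real.exp (-b * ‖v - x‖ ^ 2)) ∧
    ∫ v, Real.exp (-b * ‖v - x‖ ^ 2) = (Real.pi / b) ^ ((d : ℝ) / 2) := by
  have h : ∫ v : EuclideanSpace ℝ (Fin d), Real.exp (-b * ‖v‖ ^ 2) = (Real.pi / b) ^ ((d : ℝ) / 2) := by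
    simpa using GaussianFourier.integral_rexp_neg_mul_sq_norm (V := EuclideanSpace ℝ (Fin d)) hb
  have h2 : ∫ v, Real.exp (-b * ‖v - x‖ ^ 2) = (Real.pi / b) ^ ((d : ℝ) / 2) := by
    rw [← h]
    exact integral_sub_right_eq_self (fun v => Real.exp (-b * ‖v‖ ^ 2)) x
  refine ⟨?_, h2⟩
  by_contra hi
  rw [integral_undef hi] at h2
  have : 0 < (Real.pi / b) ^ ((d : ℝ) / 2) := by have := Real.pi_pos; positivity
  linarith

lemma log_bound {I a b s t : ℝ} (ha : 0 < a) (h1 : a * Real.exp (t - s) ≤ I)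
    (h2 : I ≤ b * Real.exp (t - s)) :
    |Real.log I - (t - s)| ≤ 1 + |Real.log a| + |Real.log b| := by
  have hI : 0 < I := lt_of_lt_of_le (by positivity) h1
  have hb : 0 < b := by
    by_contra hb
    have := Real.exp_pos (t - s)
    nlinarith
  have k1 := Real.log_le_log (by positivity) h1
  have k2 := Real.log_le_log hI h2
  rw [Real.log_mul ha.ne' (Real.exp_pos _).ne', Real.log_exp] at k1
  rw [Real.log_mul hb.ne' (Real.exp_pos _).ne', Real.log_exp] at k2
  rw [abs_le]
  constructor
  · linarith [neg_abs_le (Real.log a), abs_nonneg (Real.log b)]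
  · linarith [le_abs_self (Real.log b), abs_nonneg (Real.log a)]

theorem stmt11 {d : ℕ} (hd : 1 ≤ d)
    (P : Set (EuclideanSpace ℝ (Fin d))) (hP : IsCompact P)
    (hPint : (interior P).Nonempty)
    (f g : EuclideanSpace ℝ (Fin d) → ℝ)
    (hf : ContDiffOn ℝ (⊤ : ℕ∞) f P) (hconc : StrictConcaveOn ℝ P f)
    (xstar : EuclideanSpace ℝ (Fin d)) (hx : xstar ∈ interior P)
    (hmax : IsMaxOn f P xstar)
    (huniq : ∀ y ∈ P, IsMaxOn f P y → y = xstar)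
    (hHess : ∀ v : EuclideanSpace ℝ (Fin d), v ≠ 0 →
      (iteratedFDerivWithin ℝ 2 f P xstar) ![v, v] < 0)
    (hg : ContDiffOn ℝ (⊤ : ℕ∞) g P) (hg0 : ∀ x ∈ P, 0 ≤ g x)
    (hgbdd : BddAbove (g '' P)) (hgx : 0 < g xstar) :
    ∃ C : ℝ, 0 < C ∧ ∃ N : ℕ, ∀ n : ℕ, N ≤ n →
      |Real.log (∫ x in P, Real.exp (n * f x) * g x)
        - (n * f xstar - (d / 2 : ℝ) * Real.log n)| ≤ C := by
  have hPn : P ∈ 𝓝 xstar := mem_interior_iff_mem_nhds.1 hx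
  have hxP : xstar ∈ P := interior_subset hx
  have hfx : ContDiffAt ℝ 2 f xstar :=
    ((hf.contDiffAt hPn)).of_le (WithTop.coe_le_coe.2 (le_top : (2 : ℕ∞) ≤ ⊤))
  have h0 : fderiv ℝ f xstar = 0 := (hmax.isLocalMax hPn).fderiv_eq_zero
  set L := fderiv ℝ (fderiv ℝ f) xstar with hL
  have hneg : ∀ v, v ≠ 0 → L v v < 0 := by
    intro v hv
    have h := hHess v hv
    have e : iteratedFDerivWithin ℝ 2 f P xstar = iteratedFDeriv ℝ 2 f xstar := by
      rw [← iteratedFDerivWithin_univ]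
      exact iteratedFDerivWithin_congr_set (eventuallyEq_univ.2 hPn) 2
    rw [e, iteratedFDeriv_two_apply] at h
    simpa using h
  obtain ⟨c, hc, hLc⟩ := neg_coercive L hneg
  obtain ⟨r, hr, hquad⟩ := quad_approx hfx h0 (ε := c / 4) (by positivity)
  -- global upper bound
  have hup : ∃ m > 0, ∀ y ∈ P, f y ≤ f xstar - m * ‖y - xstar‖ ^ 2 := by
    obtain ⟨δ, hδ, hfar⟩ := (hP.diff (Metric.isOpen_ball (x := xstar) (ε := r))).exists_forall_le'
      (f := fun y => (f xstar - f y) / ‖y - xstar‖ ^ 2) (a := 0) (by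
        apply ContinuousOn.div
        · exact continuousOn_const.sub (hf.continuousOn.mono Set.sdiff_subset)
        · fun_prop
        · rintro y ⟨-, hy⟩ h
          have : y = xstar := by simpa [sub_eq_zero] using h
          exact hy (by simp [this, hr])) (by
      rintro y ⟨hyP, hy⟩
      have hne : y ≠ xstar := by rintro rfl; exact hy (by simp [hr])
      have hlt : f y < f xstar := by
        refine lt_of_le_of_ne (hmax hyP) fun h => hne (huniq y hyP fun z hz => ?_)
        simpa [h] using hmax hz
      have : 0 < ‖y - xstar‖ := norm_pos_iff.2 (sub_ne_zero.2 hne)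
      have := sub_pos.2 hlt
      positivity)
    refine ⟨min δ (c / 4), by positivity, fun y hy => ?_⟩
    have hsq : 0 ≤ ‖y - xstar‖ ^ 2 := by positivity
    by_cases hyb : y ∈ Metric.ball xstar r
    · have h1 := (abs_le.1 (hquad y hyb)).2
      have h2 := hLc (y - xstar)
      have h3 := mul_le_mul_of_nonneg_right (min_le_right δ (c / 4)) hsq
      linarith
    · have h1 := hfar y ⟨hy, hyb⟩
      have hne : y ≠ xstar := by rintro rfl; exact hyb (by simp [hr])
      have : 0 < ‖y - xstar‖ := norm_pos_iff.2 (sub_ne_zero.2 hne)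
      rw [le_div_iff₀ (by positivity)] at h1
      have h3 := mul_le_mul_of_nonneg_right (min_le_left δ (c / 4)) hsq
      linarith
  obtain ⟨m, hm, hup⟩ := hup
  -- local lower bound
  obtain ⟨M, hM, hlow⟩ : ∃ M > 0, ∀ y ∈ Metric.ball xstar r,
      f xstar - M * ‖y - xstar‖ ^ 2 ≤ f y := by
    refine ⟨‖L‖ + c, by positivity, fun y hy => ?_⟩
    have h1 := (abs_le.1 (hquad y hy)).1
    have h2 := (abs_le.1 (L.le_opNorm₂ (y - xstar) (y - xstar))).1
    have hsq : 0 ≤ c * ‖y - xstar‖ ^ 2 := by positivity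
    have hsq2 : 0 ≤ ‖L‖ * ‖y - xstar‖ ^ 2 := by positivity
    linarith
  have hgc : ContinuousAt g xstar := hg.continuousOn.continuousAt hPn
  have hev : ∀ᶠ y in 𝓝 xstar, g xstar / 2 < g y ∧ y ∈ P :=
    (hgc.eventually (lt_mem_nhds (half_lt_self hgx))).and hPn
  obtain ⟨ρ, hρ, hρb⟩ := Metric.eventually_nhds_iff_ball.1 hev
  obtain ⟨G, hG⟩ := hgbdd
  have hGx : g xstar ≤ G := hG ⟨_, hxP, rfl⟩
  have hGpos : 0 < G := hgx.trans_le hGx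
  set V : ℝ := (volume (Metric.ball (0 : EuclideanSpace ℝ (Fin d)) 1)).toReal with hV
  have hVpos : 0 < V := ENNReal.toReal_pos (Metric.measure_ball_pos _ _ one_pos).ne'
    measure_ball_lt_top.ne
  set a : ℝ := Real.exp (-M) * (g xstar / 2) * V with ha
  set b : ℝ := G * (Real.pi / m) ^ ((d : ℝ) / 2) with hb
  refine ⟨1 + |Real.log a| + |Real.log b|, by positivity, ?_⟩
  obtain ⟨N, hN⟩ := exists_nat_gt (1 / (min r ρ) ^ 2)
  refine ⟨N + 1, fun n hn => ?_⟩
  have hn0 : (0 : ℝ) < n := by exact_mod_cast (by omega : 0 < n)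
  have hpow : Real.exp (n * f xstar - (d / 2 : ℝ) * Real.log n)
      = Real.exp (n * f xstar) * ((n : ℝ) ^ ((d : ℝ) / 2))⁻¹ := by
    rw [Real.exp_sub, Real.rpow_def_of_pos hn0, div_eq_mul_inv, mul_comm (Real.log _)]
  have hint : IntegrableOn (fun x => Real.exp (n * f x) * g x) P := by
    apply ContinuousOn.integrableOn_compact hP
    have := hf.continuousOn
    have := hg.continuousOn
    fun_prop
  apply log_bound
  · positivity
  · set s : ℝ := 1 / Real.sqrt n with hs
    have hs0 : 0 < s := by positivity
    have hs2 : s ^ 2 = 1 / n := by rw [hs, div_pow, Real.sq_sqrt hn0.le, one_pow]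
    have hsr : s < min r ρ := by
      have hmin : 0 < min r ρ := lt_min hr hρ
      refine lt_of_pow_lt_pow_left₀ 2 hmin.le ?_
      rw [hs2, one_div_lt hn0 (by positivity)]
      refine hN.trans ?_
      exact_mod_cast (by omega : N < n)
    have hsub : Metric.ball xstar s ⊆ P := fun y hy =>
      (hρb y (Metric.ball_subset_ball (hsr.le.trans (min_le_right _ _)) hy)).2
    have hvol : volume.real (Metric.ball xstar s) = s ^ d * V := by
      rw [measureReal_def, Measure.addHaar_ball_of_pos _ _ hs0, ENNReal.toReal_mul,
        ENNReal.toReal_ofReal (by positivity)]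
      simp [hV]
    have hsd : s ^ d = ((n : ℝ) ^ ((d : ℝ) / 2))⁻¹ := by
      rw [hs, Real.sqrt_eq_rpow, one_div, inv_pow, ← Real.rpow_natCast, ← Real.rpow_mul hn0.le]
      congr 2
      ring
    calc a * Real.exp (n * f xstar - (d / 2 : ℝ) * Real.log n)
        = ∫ y in Metric.ball xstar s, Real.exp (n * f xstar - M) * (g xstar / 2) := by
          rw [setIntegral_const, hvol, hpow, hsd, smul_eq_mul, sub_eq_add_neg, Real.exp_add]
          ring
      _ ≤ ∫ y in Metric.ball xstar s, Real.exp (n * f y) * g y := by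
          apply setIntegral_mono_on
          · exact integrableOn_const measure_ball_lt_top.ne
          · exact hint.mono_set hsub
          · exact measurableSet_ball
          · intro y hy
            have h1 := hlow y (Metric.ball_subset_ball (hsr.le.trans (min_le_left _ _)) hy)
            have h2 := (hρb y (Metric.ball_subset_ball (hsr.le.trans (min_le_right _ _)) hy)).1
            have h3 : ‖y - xstar‖ ^ 2 ≤ 1 / n := by
              rw [← hs2]
              have : ‖y - xstar‖ < s := by simpa [dist_eq_norm] using hy
              gcongr
            have h4 : n * (f xstar - M * ‖y - xstar‖ ^ 2) ≤ n * f y := by gcongr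
            have h5 : n * (M * ‖y - xstar‖ ^ 2) ≤ n * (M * (1 / n)) := by gcongr
            have h6 : n * (M * (1 / n)) = M := by field_simp
            have h7 : n * f xstar - M ≤ n * f y := by linarith
            gcongr
      _ ≤ ∫ y in P, Real.exp (n * f y) * g y := by
          apply setIntegral_mono_set hint
          · filter_upwards [ae_restrict_mem hP.measurableSet] with y hy
            exact mul_nonneg (Real.exp_pos _).le (hg0 y hy)
          · exact hsub.eventuallyLE
  · obtain ⟨hi, hv⟩ := gauss_upper xstar (mul_pos hn0 hm)
    set K : EuclideanSpace ℝ (Fin d) → ℝ :=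
      fun y => Real.exp (n * f xstar) * G * Real.exp (-(n * m) * ‖y - xstar‖ ^ 2) with hK
    have hKi : Integrable K := hi.const_mul _
    calc ∫ y in P, Real.exp (n * f y) * g y
        ≤ ∫ y in P, K y := by
          apply setIntegral_mono_on hint hKi.integrableOn hP.measurableSet
          intro y hy
          have h1 := hup y hy
          have h2 : g y ≤ G := hG ⟨y, hy, rfl⟩
          have h3 : n * f y ≤ n * (f xstar - m * ‖y - xstar‖ ^ 2) := by gcongr
          have h4 : Real.exp (n * f y) ≤
              Real.exp (n * f xstar) * Real.exp (-(n * m) * ‖y - xstar‖ ^ 2) := by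
            rw [← Real.exp_add]
            apply Real.exp_le_exp.2
            linarith
          calc _ ≤ (Real.exp (n * f xstar) * Real.exp (-(n * m) * ‖y - xstar‖ ^ 2)) * G :=
                mul_le_mul h4 h2 (hg0 y hy) (by positivity)
            _ = K y := by simp only [hK]; ring
      _ ≤ ∫ y, K y := by
          apply setIntegral_le_integral hKi
          exact Eventually.of_forall fun y => by simp only [hK]; positivity
      _ = b * Real.exp (n * f xstar - (d / 2 : ℝ) * Real.log n) := by
          rw [hK, integral_const_mul, hv, hpow, hb, mul_comm (n : ℝ) m, ← div_div,
            Real.div_rpow (by have := Real.pi_pos; positivity) hn0.le]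
          ring

end
end

section
/- Let k ≥ 1, let A be a real symmetric k×k matrix, and let β > 0. Let S*_β be the unique maximizer over 𝒢 of S ↦ β tr(AS) + (1/2) log det S, and let q* = max_{S ∈ 𝒢} tr(AS). Then for every α ∈ (0, 1), tr(A S*_β) ≥ α q* + (1 − α) tr(A) + (k/(2β)) ln(1 − α). -/
open MeasureTheory Matrix Filter Topology

noncomputable section

theorem log_det_aux {k : ℕ} {S : Matrix (Fin k) (Fin k) ℝ} (hS : S.PosDef)
    (hd : ∀ i, S i i = 1) : Real.log S.det ≤ 0 := by
  have hH := hS.isHermitian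
  have h1 : S.det = ∏ i, hH.eigenvalues i := by
    simpa using hH.det_eq_prod_eigenvalues
  have h2 : S.trace = ∑ i, hH.eigenvalues i := by
    simpa using hH.trace_eq_sum_eigenvalues
  have h3 : S.trace = k := by simp [Matrix.trace, hd]
  rw [h1, Real.log_prod (fun i _ => (hS.eigenvalues_pos i).ne')]
  calc ∑ i, Real.log (hH.eigenvalues i) ≤ ∑ i, (hH.eigenvalues i - 1) :=
        Finset.sum_le_sum fun i _ => Real.log_le_sub_one_of_pos (hS.eigenvalues_pos i)
    _ = 0 := by simp [Finset.sum_sub_distrib, ← h2, h3]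

theorem det_lower_aux {k : ℕ} {M : Matrix (Fin k) (Fin k) ℝ} (hH : M.IsHermitian)
    {c : ℝ} (hc : 0 < c) (hP : (M - c • 1).PosSemidef) : c ^ k ≤ M.det := by
  have h1 : M.det = ∏ i, hH.eigenvalues i := by
    simpa using hH.det_eq_prod_eigenvalues
  have key : ∀ i, c ≤ hH.eigenvalues i := by
    intro i
    set v : Fin k → ℝ := ⇑(hH.eigenvectorBasis i) with hv
    have hm : M *ᵥ v = hH.eigenvalues i • v := hH.mulVec_eigenvectorBasis i
    have hp := hP.dotProduct_mulVec_nonneg v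
    have hne : v ≠ 0 := by
      intro h
      apply hH.eigenvectorBasis.toBasis.ne_zero i
      ext j
      simpa using congrFun h j
    have hvv : 0 < star v ⬝ᵥ v := Matrix.dotProduct_star_self_pos_iff.mpr hne
    rw [Matrix.sub_mulVec, hm, Matrix.smul_mulVec, Matrix.one_mulVec, ← sub_smul,
      dotProduct_smul, smul_eq_mul] at hp
    have := nonneg_of_mul_nonneg_left hp hvv
    linarith
  rw [h1]
  calc c ^ k = ∏ _i : Fin k, c := by simp
    _ ≤ _ := Finset.prod_le_prod (fun _ _ => hc.le) fun i _ => key i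

/-- With `S*_β` the unique maximizer over `𝒢` of
`S ↦ β tr(AS) + (1/2) log det S` and `q* = max_{S ∈ 𝒢} tr(AS)`, one has, for all
`α ∈ (0,1)`, `tr(A S*_β) ≥ α q* + (1−α) tr(A) + (k/(2β)) ln(1−α)`. -/
theorem stmt17 {k : ℕ} (hk : 1 ≤ k) (A : Matrix (Fin k) (Fin k) ℝ) (hA : A.IsSymm)
    (β : ℝ) (hβ : 0 < β) (Sstar : Matrix (Fin k) (Fin k) ℝ)
    (hmem : Sstar ∈ unitDiagPD k) (hmax : IsMaxOn (gwObj β A) (unitDiagPD k) Sstar)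
    (huniq : ∀ T ∈ unitDiagPD k, IsMaxOn (gwObj β A) (unitDiagPD k) T → T = Sstar)
    (qstar : ℝ) (hq : IsGreatest ((fun S => (A * S).trace) '' unitDiagPSD k) qstar) :
    ∀ α ∈ Set.Ioo (0 : ℝ) 1,
      α * qstar + (1 - α) * A.trace + ((k : ℝ) / (2 * β)) * Real.log (1 - α)
        ≤ (A * Sstar).trace := by
  intro α hα
  obtain ⟨h0, h1⟩ := hα
  obtain ⟨⟨S, ⟨hS, hSd⟩, hSq⟩, -⟩ := hq
  simp only at hSq
  have hc : 0 < 1 - α := by linarith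
  set M : Matrix (Fin k) (Fin k) ℝ := α • S + (1 - α) • 1 with hM
  have hMpd : M.PosDef :=
    Matrix.PosDef.posSemidef_add (hS.smul h0.le) (Matrix.PosDef.one.smul hc)
  have hMmem : M ∈ unitDiagPD k := by
    refine ⟨hMpd, fun i => ?_⟩
    simp [hM, hSd i]
  have hdet1 : Real.log Sstar.det ≤ 0 := log_det_aux hmem.1 hmem.2
  have hdet2 : (1 - α) ^ k ≤ M.det := det_lower_aux hMpd.isHermitian hc (by
    have : M - (1 - α) • 1 = α • S := by simp [hM]
    rw [this]; exact hS.smul h0.le)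
  have hlog : (k : ℝ) * Real.log (1 - α) ≤ Real.log M.det := by
    rw [← Real.log_pow]
    exact Real.log_le_log (by positivity) hdet2
  have htr : (A * M).trace = α * qstar + (1 - α) * A.trace := by
    simp [hM, Matrix.mul_add, Matrix.trace_add, Matrix.trace_smul, hSq]
  have h := hmax hMmem
  simp only [Set.mem_setOf_eq, gwObj, htr] at h
  have e : (k : ℝ) / (2 * β) * Real.log (1 - α) = (k * Real.log (1 - α) / 2) / β := by
    field_simp
  rw [e, ← le_sub_iff_add_le', div_le_iff₀ hβ]
  nlinarith

end
end
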